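/- arXiv:2508.08818 — 3 statements merged into one kernel-verified Lean document; each statement's English description precedes it below -/
import Mathlib

section
/- Let n ≥ 1, let A be an n×n complex matrix whose characteristic polynomial splits over the reals with real eigenvalues λ_1(A) ≥ λ_2(A) ≥ ⋯ ≥ λ_n(A), and let B = A − (tr A / n)·I_n, so that tr B^{2r} = ∑_{i=1}^n (λ_i(A) − tr A/n)^{2r} is a nonnegative real number. Then for every positive integer r and every 1 ≤ j ≤ n: tr A/n − ( (j−1)^{2r−1}·tr B^{2r} / ( (n−j+1)^{2r} + (n−j+1)(j−1)^{2r−1} ) )^{1/(2r)} ≤ λ_j(A) ≤ tr A/n + ( (n−j)^{2r−1}·tr B^{2r} / ( j^{2r} + j(n−j)^{2r−1} ) )^{1/(2r)}. -/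
/-!
The eigenvalues of `p(A)` are the `p(λ_i)`, with multiplicity: factoring a polynomial `q` over `ℂ`
into linear factors gives `det q(A) = ∏ q(λ_i)`, and applying this to `q = t - p` computes the
characteristic polynomial of `p(A)` at every `t`. Hence `tr B^{2r} = ∑ y_i^{2r}` for the centred
eigenvalues `y_i = λ_i - tr A / n`, which sum to zero.

The rest is an inequality for real numbers `y_i` with zero sum. Let `T` be a set of `c` indices on
which `y_i ≥ t > 0`, and let `m` be the number of remaining indices. The indices of `T` contribute
at least `c t^{2r}` to `∑ y_i^{2r}`. The others have sum at most `-c t`, so by the power mean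
inequality they contribute at least `(c t)^{2r} / m^{2r-1}`. Solving for `t` gives the bound.
The upper estimate for `λ_j` uses `T = {1, …, j}`; the lower one uses `T = {j, …, n}` and `-y`.
-/

open Polynomial in
theorem det_aeval_of_charpoly_eq_prod {n : ℕ} (A : Matrix (Fin n) (Fin n) ℂ) (l : Fin n → ℂ)
    (h : A.charpoly = ∏ i, (X - C (l i))) (q : ℂ[X]) :
    (aeval A q).det = ∏ i, q.eval (l i) := by
  have hlin : ∀ a : ℂ, (aeval A (X - C a)).det = ∏ i, (X - C a).eval (l i) := by
    intro a
    have h1 : A.charpoly.eval a = ∏ i, (a - l i) := by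
      rw [h, eval_prod]; simp
    rw [Matrix.eval_charpoly] at h1
    have h2 : aeval A (X - C a) = -(Matrix.scalar (Fin n) a - A) := by
      rw [map_sub, aeval_X, aeval_C, neg_sub]; rfl
    rw [h2, Matrix.det_neg, h1, Fintype.card_fin]
    simp only [eval_sub, eval_X, eval_C]
    rw [← Fin.prod_const, ← Finset.prod_mul_distrib]
    exact Finset.prod_congr rfl fun i _ => by ring
  have hms : ∀ s : Multiset ℂ, (aeval A (s.map fun a => X - C a).prod).det
      = ∏ i, ((s.map fun a => X - C a).prod).eval (l i) := by
    intro s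
    induction s using Multiset.induction_on with
    | empty => simp
    | cons a s ih =>
      rw [Multiset.map_cons, Multiset.prod_cons, map_mul, Matrix.det_mul, ih, hlin,
        ← Finset.prod_mul_distrib]
      simp only [eval_mul]
  rw [(IsAlgClosed.splits q).eq_prod_roots, map_mul, Matrix.det_mul, hms, aeval_C,
    Matrix.algebraMap_eq_diagonal, Matrix.det_diagonal]
  simp only [eval_mul, eval_C, Finset.prod_mul_distrib]
  rfl

open Polynomial in
/-- Spectral mapping with multiplicities, read off at the level of the trace. -/
theorem trace_aeval_of_charpoly_eq_prod {n : ℕ} (A : Matrix (Fin n) (Fin n) ℂ) (l : Fin n → ℂ)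
    (h : A.charpoly = ∏ i, (X - C (l i))) (p : ℂ[X]) :
    (aeval A p).trace = ∑ i, p.eval (l i) := by
  have hc : (aeval A p).charpoly = ∏ i, (X - C (p.eval (l i))) := by
    refine Polynomial.funext fun t => ?_
    have h1 := det_aeval_of_charpoly_eq_prod A l h (C t - p)
    rw [map_sub, aeval_C] at h1
    rw [Matrix.eval_charpoly, eval_prod]
    simp only [eval_sub, eval_X, eval_C] at h1 ⊢
    exact h1
  rw [Matrix.trace_eq_sum_roots_charpoly, hc]
  have h2 := Polynomial.roots_multiset_prod_X_sub_C
    (Finset.univ.val.map fun i : Fin n => p.eval (l i))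
  rw [Multiset.map_map] at h2
  exact congrArg Multiset.sum h2

/-- The real-variable core: if `y` has zero sum and `t ≤ y i` on the nonempty set `T`, then `t` is
bounded through the `2r`-th moment of `y`. Here `c` and `m` are the sizes of `T` and of its
complement, kept as separate real variables so that they can be given as expressions in `n`, `j`. -/
theorem le_rpow_moment {n : ℕ} (y : Fin n → ℝ) (hy : ∑ i, y i = 0) (T : Finset (Fin n))
    (hT : T.Nonempty) (t : ℝ) (ht : ∀ i ∈ T, t ≤ y i) (r : ℕ) (hr : 1 ≤ r) (c m : ℝ)
    (hc : c = (T.card : ℝ)) (hm : m = (Tᶜ.card : ℝ)) :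
    t ≤ (m ^ (2 * r - 1) * (∑ i, y i ^ (2 * r)) / (c ^ (2 * r) + c * m ^ (2 * r - 1)))
      ^ ((1 : ℝ) / (2 * r)) := by
  have hcpos : 0 < c := by rw [hc]; exact_mod_cast hT.card_pos
  have hm0 : 0 ≤ m := by rw [hm]; positivity
  have hev : Even (2 * r) := even_two_mul r
  have hS : 0 ≤ ∑ i, y i ^ (2 * r) := Finset.sum_nonneg fun i _ => hev.pow_nonneg _
  have hden : 0 < c ^ (2 * r) + c * m ^ (2 * r - 1) := by positivity
  have hq : 0 ≤ m ^ (2 * r - 1) * (∑ i, y i ^ (2 * r)) / (c ^ (2 * r) + c * m ^ (2 * r - 1)) := by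
    positivity
  rcases le_or_gt t 0 with ht0 | ht0
  · exact ht0.trans (Real.rpow_nonneg hq _)
  have hsplit := Finset.sum_add_sum_compl T y
  have hsplitk := Finset.sum_add_sum_compl T fun i => y i ^ (2 * r)
  have hT1 : c * t ≤ ∑ i ∈ T, y i := by
    rw [hc, ← nsmul_eq_mul]; exact Finset.card_nsmul_le_sum _ _ _ ht
  have hTk : c * t ^ (2 * r) ≤ ∑ i ∈ T, y i ^ (2 * r) := by
    rw [hc, ← nsmul_eq_mul]
    exact Finset.card_nsmul_le_sum _ _ _ fun i hi => pow_le_pow_left₀ ht0.le (ht i hi) _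
  have hcompl : c * t ≤ ∑ i ∈ Tᶜ, |y i| := by
    have h1 : -∑ i ∈ Tᶜ, y i ≤ ∑ i ∈ Tᶜ, |y i| :=
      (neg_le_abs _).trans (Finset.abs_sum_le_sum_abs _ _)
    linarith
  have hpm := pow_sum_le_card_mul_sum_pow (s := Tᶜ) (f := fun i => |y i|)
    (fun i _ => abs_nonneg _) (2 * r - 1)
  have hk : 2 * r - 1 + 1 = 2 * r := by omega
  rw [hk, ← hm] at hpm
  simp only [hev.pow_abs] at hpm
  have hck : (c * t) ^ (2 * r) ≤ m ^ (2 * r - 1) * ∑ i ∈ Tᶜ, y i ^ (2 * r) :=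
    (pow_le_pow_left₀ (by positivity) hcompl _).trans hpm
  have hkey : t ^ (2 * r) ≤
      m ^ (2 * r - 1) * (∑ i, y i ^ (2 * r)) / (c ^ (2 * r) + c * m ^ (2 * r - 1)) := by
    rw [le_div_iff₀ hden, ← hsplitk]
    rw [mul_pow] at hck
    have := mul_le_mul_of_nonneg_left hTk (pow_nonneg hm0 (2 * r - 1))
    linarith
  calc t = (t ^ (2 * r)) ^ ((1 : ℝ) / (2 * r)) := by
        have := Real.pow_rpow_inv_natCast ht0.le (n := 2 * r) (by omega)
        rw [one_div]
        exact_mod_cast this.symm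
    _ ≤ _ := Real.rpow_le_rpow (by positivity) hkey (by positivity)

/-- eigenvalue bounds via the 2r-th central moment of the spectrum. -/
theorem eigenvalue_bounds_central_moments
    (n : ℕ) (hn : 1 ≤ n)
    (A : Matrix (Fin n) (Fin n) ℂ)
    (lam : Fin n → ℝ) (hlam : Antitone lam)
    (hchar : A.charpoly = ∏ i : Fin n, (Polynomial.X - Polynomial.C ((lam i : ℝ) : ℂ)))
    (B : Matrix (Fin n) (Fin n) ℂ)
    (hB : B = A - (Matrix.trace A / (n : ℂ)) • (1 : Matrix (Fin n) (Fin n) ℂ))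
    (r : ℕ) (hr : 1 ≤ r)
    (j : ℕ) (hj : 1 ≤ j) (hjn : j ≤ n) :
    (Matrix.trace A).re / n -
      ((((j : ℝ) - 1) ^ (2 * r - 1) * (Matrix.trace (B ^ (2 * r))).re /
        (((n : ℝ) - j + 1) ^ (2 * r) + ((n : ℝ) - j + 1) * ((j : ℝ) - 1) ^ (2 * r - 1)))
          ^ ((1 : ℝ) / (2 * r)))
      ≤ lam ⟨j - 1, by omega⟩ ∧
    lam ⟨j - 1, by omega⟩ ≤ (Matrix.trace A).re / n +
      ((((n : ℝ) - j) ^ (2 * r - 1) * (Matrix.trace (B ^ (2 * r))).re /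
        ((j : ℝ) ^ (2 * r) + (j : ℝ) * ((n : ℝ) - j) ^ (2 * r - 1)))
          ^ ((1 : ℝ) / (2 * r))) := by
  have htr : A.trace = ((∑ i, lam i : ℝ) : ℂ) := by
    have := trace_aeval_of_charpoly_eq_prod A _ hchar Polynomial.X
    simpa using this
  set μ : ℝ := A.trace.re / n with hμ
  have hμC : A.trace / (n : ℂ) = (μ : ℂ) := by
    rw [hμ, htr, Complex.ofReal_re]; push_cast; rfl
  have hsum : ∑ i, (lam i - μ) = 0 := by
    have hn0 : (n : ℝ) ≠ 0 := by positivity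
    rw [Finset.sum_sub_distrib, hμ, htr, Complex.ofReal_re]
    simp only [Finset.sum_const, Finset.card_univ, Fintype.card_fin, nsmul_eq_mul]
    field_simp
    ring
  have htrB : (B ^ (2 * r)).trace.re = ∑ i, (lam i - μ) ^ (2 * r) := by
    have h1 := trace_aeval_of_charpoly_eq_prod A _ hchar
      ((Polynomial.X - Polynomial.C (μ : ℂ)) ^ (2 * r))
    have h2 : Polynomial.aeval A ((Polynomial.X - Polynomial.C (μ : ℂ)) ^ (2 * r))
        = B ^ (2 * r) := by
      rw [map_pow, map_sub, Polynomial.aeval_X, Polynomial.aeval_C, hB, hμC,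
        Algebra.algebraMap_eq_smul_one]
    rw [h2] at h1
    have h3 : (B ^ (2 * r)).trace = ((∑ i, (lam i - μ) ^ (2 * r) : ℝ) : ℂ) := by
      rw [h1]; simp
    rw [h3, Complex.ofReal_re]
  rw [htrB]
  set a : Fin n := ⟨j - 1, by omega⟩ with ha
  have hcardIic : (Finset.Iic a).card = j := by simp [ha]; omega
  have hcardIci : (Finset.Ici a).card = n - (j - 1) := by simp [ha]
  constructor
  · have := le_rpow_moment (fun i => -(lam i - μ))
      (by rw [Finset.sum_neg_distrib, hsum, neg_zero]) (Finset.Ici a) ⟨a, by simp⟩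
      (-(lam a - μ)) (fun i hi => by
        have := hlam (Finset.mem_Ici.1 hi); linarith) r hr ((n : ℝ) - j + 1) ((j : ℝ) - 1)
      (by rw [hcardIci, Nat.cast_sub (by omega), Nat.cast_sub hj]; push_cast; ring)
      (by rw [Finset.card_compl, hcardIci, Fintype.card_fin,
            show n - (n - (j - 1)) = j - 1 by omega, Nat.cast_sub hj]; simp)
    simp only [(even_two_mul r).neg_pow] at this
    linarith
  · have := le_rpow_moment (fun i => lam i - μ) hsum (Finset.Iic a) ⟨a, by simp⟩
      (lam a - μ) (fun i hi => by
        have := hlam (Finset.mem_Iic.1 hi); linarith) r hr (j : ℝ) ((n : ℝ) - j)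
      (by rw [hcardIic])
      (by rw [Finset.card_compl, hcardIic, Fintype.card_fin, Nat.cast_sub hjn])
    linarith
end

section
/- Let n ≥ 3 and let A be an n×n complex matrix whose characteristic polynomial splits over the reals with n distinct integer eigenvalues λ_1(A) > λ_2(A) > ⋯ > λ_n(A), and let B = A − (tr A / n)·I_n, so that tr B⁴ = ∑_{i=1}^n (λ_i(A) − tr A/n)⁴ is a nonnegative real number. Then spd(A) ≤ ( 8·tr B⁴ − (n−4)(n−3)(n−2)(3n²−18n+20)/240 )^{1/4} if n is even, and spd(A) ≤ ( 8·tr B⁴ − (n−3)(3n⁴−36n³+182n²−444n+415)/240 )^{1/4} if n is odd. Furthermore, if n divides tr A, then spd(A) ≤ ( 8·tr B⁴ − (n−2)(3n⁴−24n³+92n²−176n+120)/240 )^{1/4} if n is even, and spd(A) ≤ ( 8·tr B⁴ − (n−1)(n−2)(n−3)(3n²−12n+5)/240 )^{1/4} if n is odd. -/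
/-!
Write `t = tr A / n`. Since the eigenvalues are distinct, `A` has a basis of eigenvectors, which also
diagonalizes `B`, so `tr B⁴ = ∑ (λᵢ - t)⁴` with `t` real. Reversing the order of the eigenvalues
pairs `λᵢ` with `λ_{n-1-i}` (indices from `0`), and `(a - b)⁴ ≤ 8 (a⁴ + b⁴)` gives
`16 tr B⁴ ≥ ∑ (λᵢ - λ_{n-1-i})⁴`. The two extreme terms are `spd⁴` each. Every other term is at
least `(n - 1 - 2i)⁴`, because distinct integers are at least `1` apart. Summing the fourth powers,

  `spd⁴ ≤ 8 tr B⁴ - (n (n² - 1) (3 n² - 7) / 30 - (n - 1)⁴)`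

(`spread_pow_four_le`), with no assumption on the parity of `n` or on the divisibility of `tr A`.
The subtracted quantity dominates each of the four polynomials of the theorem.
-/

/-- A matrix acting diagonally on a linearly independent family of full size has trace equal to the
sum of the diagonal factors. -/
lemma trace_eq_sum_of_mulVec_eq {n : ℕ} (v : Fin n → Fin n → ℂ) (hv : LinearIndependent ℂ v)
    (C : Matrix (Fin n) (Fin n) ℂ) (c : Fin n → ℂ) (h : ∀ i, C.mulVec (v i) = c i • v i) :
    C.trace = ∑ i, c i := by
  let b := basisOfLinearIndependentOfCardEqFinrank' v hv (by simp)
  have hb : ∀ i, b i = v i := fun i => by simp [b]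
  rw [← Matrix.trace_toLin'_eq, LinearMap.trace_eq_matrix_trace ℂ b, Matrix.trace]
  refine Finset.sum_congr rfl fun i _ => ?_
  rw [Matrix.diag_apply, LinearMap.toMatrix_apply, hb, Matrix.toLin'_apply, h, ← hb]
  simp

lemma exists_eigenvectors {n : ℕ} (A : Matrix (Fin n) (Fin n) ℂ) (μ : Fin n → ℂ)
    (hμ : Function.Injective μ)
    (hchar : A.charpoly = ∏ i : Fin n, (Polynomial.X - Polynomial.C (μ i))) :
    ∃ v : Fin n → Fin n → ℂ, LinearIndependent ℂ v ∧ ∀ i, A.mulVec (v i) = μ i • v i := by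
  have hev : ∀ i, Module.End.HasEigenvalue (Matrix.toLin' A) (μ i) := by
    intro i
    rw [Module.End.hasEigenvalue_iff_isRoot_charpoly, Matrix.charpoly_toLin', hchar,
      Polynomial.IsRoot.def, Polynomial.eval_prod]
    exact Finset.prod_eq_zero (Finset.mem_univ i) (by simp)
  choose v hv using fun i => (hev i).exists_hasEigenvector
  refine ⟨v, Module.End.eigenvectors_linearIndependent' _ μ hμ v hv, fun i => ?_⟩
  simpa using (hv i).apply_eq_smul

/-- The fourth moment of the spectrum about its mean, as the trace of `B⁴`. -/
lemma trace_pow_four_eq {n : ℕ} (A B : Matrix (Fin n) (Fin n) ℂ) (lam : Fin n → ℤ)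
    (hlam : StrictAnti lam)
    (hchar : A.charpoly = ∏ i : Fin n, (Polynomial.X - Polynomial.C ((lam i : ℤ) : ℂ)))
    (hB : B = A - (Matrix.trace A / (n : ℂ)) • (1 : Matrix (Fin n) (Fin n) ℂ)) :
    ∃ t : ℝ, (Matrix.trace (B ^ 4)).re = ∑ i, ((lam i : ℝ) - t) ^ 4 := by
  obtain ⟨v, hv, hAv⟩ := exists_eigenvectors A (fun i => ((lam i : ℤ) : ℂ))
    (Int.cast_injective.comp hlam.injective) hchar
  have htr : A.trace = ∑ i, ((lam i : ℤ) : ℂ) := trace_eq_sum_of_mulVec_eq v hv A _ hAv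
  obtain ⟨t, ht⟩ : ∃ t : ℝ, A.trace / (n : ℂ) = (t : ℂ) :=
    ⟨(∑ i, (lam i : ℝ)) / n, by rw [htr]; push_cast; rfl⟩
  refine ⟨t, ?_⟩
  have hBv : ∀ i, B.mulVec (v i) = (((lam i : ℤ) : ℂ) - t) • v i := by
    intro i
    rw [hB, ht, Matrix.sub_mulVec, hAv, Matrix.smul_mulVec, Matrix.one_mulVec, sub_smul]
  have hB4 : (B ^ 4).trace = ∑ i, (((lam i : ℤ) : ℂ) - t) ^ 4 := by
    refine trace_eq_sum_of_mulVec_eq v hv _ _ fun i => ?_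
    simp only [pow_succ, pow_zero, one_mul, ← Matrix.mulVec_mulVec, hBv, Matrix.mulVec_smul,
      smul_smul, mul_assoc]
  have hcast : (B ^ 4).trace = ((∑ i, ((lam i : ℝ) - t) ^ 4 : ℝ) : ℂ) := by
    rw [hB4]; push_cast; rfl
  rw [hcast, Complex.ofReal_re]

/-- A strictly decreasing integer sequence drops by at least the distance of the indices. -/
lemma index_sub_le {n : ℕ} (lam : Fin n → ℤ) (hlam : StrictAnti lam) {i j : Fin n} (hij : i ≤ j) :
    (j : ℤ) - i ≤ lam i - lam j := by
  obtain ⟨i, hi⟩ := i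
  obtain ⟨j, hj⟩ := j
  simp only [Fin.mk_le_mk] at hij
  induction j, hij using Nat.le_induction with
  | base => simp
  | succ j hij ih =>
    have h1 := ih (by omega)
    have h2 : lam ⟨j + 1, hj⟩ < lam ⟨j, by omega⟩ := hlam (by simp)
    push_cast at h1 ⊢
    omega

lemma index_pow_four_le {n : ℕ} (lam : Fin n → ℤ) (hlam : StrictAnti lam) (i : Fin n) :
    ((n : ℝ) - 1 - 2 * (i : ℕ)) ^ 4 ≤ ((lam i : ℝ) - lam i.rev) ^ 4 := by
  have hrev : ((i.rev : ℕ) : ℤ) = n - 1 - i := by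
    have := i.isLt
    rw [Fin.val_rev]; omega
  have habs : |(n : ℤ) - 1 - 2 * (i : ℕ)| ≤ |lam i - lam i.rev| := by
    rcases le_total i i.rev with h | h
    · have h1 := index_sub_le lam hlam h
      have h0 : (0 : ℤ) ≤ (i.rev : ℕ) - (i : ℕ) := sub_nonneg.2 (by exact_mod_cast h)
      rw [abs_of_nonneg (by omega), abs_of_nonneg (by omega)]
      omega
    · have h1 := index_sub_le lam hlam h
      have h0 : (0 : ℤ) ≤ (i : ℕ) - (i.rev : ℕ) := sub_nonneg.2 (by exact_mod_cast h)
      rw [abs_of_nonpos (by omega), abs_of_nonpos (by omega)]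
      omega
  have hpow := pow_le_pow_left₀ (abs_nonneg _) habs 4
  rw [Even.pow_abs (by decide), Even.pow_abs (by decide)] at hpow
  exact_mod_cast hpow

lemma sum_index_pow_four (n : ℕ) :
    ∑ i : Fin n, ((n : ℝ) - 1 - 2 * (i : ℕ)) ^ 4
      = (n : ℝ) * ((n : ℝ) ^ 2 - 1) * (3 * (n : ℝ) ^ 2 - 7) / 15 := by
  -- The partial sums are computed with the shift `a` fixed, so that induction applies.
  have key : ∀ (a : ℝ) (m : ℕ), ∑ i ∈ Finset.range m, (a - 2 * (i : ℝ)) ^ 4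
      = m * a ^ 4 - 4 * a ^ 3 * (m * (m - 1)) + 4 * a ^ 2 * (m * (m - 1) * (2 * m - 1))
        - 8 * a * (m * (m - 1)) ^ 2
        + 8 * (m * (m - 1) * (2 * m - 1) * (3 * m ^ 2 - 3 * m - 1)) / 15 := by
    intro a m
    induction m with
    | zero => simp
    | succ m ih => rw [Finset.sum_range_succ, ih]; push_cast; ring
  rw [Fin.sum_univ_eq_sum_range (fun i => ((n : ℝ) - 1 - 2 * (i : ℝ)) ^ 4), key]
  ring

lemma sub_pow_four_le (a b : ℝ) : (a - b) ^ 4 ≤ 8 * (a ^ 4 + b ^ 4) := by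
  nlinarith [sq_nonneg (a + b), sq_nonneg (a ^ 2 - b ^ 2), mul_nonneg (sq_nonneg (a + b))
    (sq_nonneg (a - b)), sq_nonneg ((a + b) ^ 2), sq_nonneg (a * b)]

/-- The four bounds of the theorem are weakenings of this one. -/
lemma spread_pow_four_le {n : ℕ} (hn : 3 ≤ n) (h0 : 0 < n) (hlast : n - 1 < n)
    (lam : Fin n → ℤ) (hlam : StrictAnti lam) (t : ℝ) :
    ((lam ⟨0, h0⟩ : ℝ) - lam ⟨n - 1, hlast⟩) ^ 4 ≤
      8 * ∑ i, ((lam i : ℝ) - t) ^ 4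
        - ((n : ℝ) * ((n : ℝ) ^ 2 - 1) * (3 * (n : ℝ) ^ 2 - 7) / 30 - ((n : ℝ) - 1) ^ 4) := by
  have hpair : ∑ i, ((lam i : ℝ) - lam i.rev) ^ 4 ≤ 16 * ∑ i, ((lam i : ℝ) - t) ^ 4 := by
    have hrev : ∑ i : Fin n, ((lam i.rev : ℝ) - t) ^ 4 = ∑ i, ((lam i : ℝ) - t) ^ 4 :=
      Equiv.sum_comp Fin.revPerm (fun i => ((lam i : ℝ) - t) ^ 4)
    calc ∑ i, ((lam i : ℝ) - lam i.rev) ^ 4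
        ≤ ∑ i, 8 * (((lam i : ℝ) - t) ^ 4 + ((lam i.rev : ℝ) - t) ^ 4) := by
          refine Finset.sum_le_sum fun i _ => ?_
          have := sub_pow_four_le ((lam i : ℝ) - t) ((lam i.rev : ℝ) - t)
          rwa [sub_sub_sub_cancel_right] at this
      _ = 16 * ∑ i, ((lam i : ℝ) - t) ^ 4 := by
          rw [← Finset.mul_sum, Finset.sum_add_distrib, hrev]; ring
  have hne : (⟨0, h0⟩ : Fin n) ≠ ⟨n - 1, hlast⟩ := by
    simp only [ne_eq, Fin.mk.injEq]; omega
  -- The excess over the equally spaced spectrum is nonnegative termwise; only the two extreme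
  -- indices are kept.
  have hext := Finset.sum_le_sum_of_subset_of_nonneg
    (f := fun i : Fin n => ((lam i : ℝ) - lam i.rev) ^ 4 - ((n : ℝ) - 1 - 2 * (i : ℕ)) ^ 4)
    (Finset.subset_univ {⟨0, h0⟩, ⟨n - 1, hlast⟩})
    (fun i _ _ => sub_nonneg.2 (index_pow_four_le lam hlam i))
  have hr0 : (⟨0, h0⟩ : Fin n).rev = ⟨n - 1, hlast⟩ := by
    ext; simp [Fin.val_rev]
  have hr1 : (⟨n - 1, hlast⟩ : Fin n).rev = ⟨0, h0⟩ := by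
    rw [← hr0, Fin.rev_rev]
  rw [Finset.sum_pair hne, hr0, hr1, Finset.sum_sub_distrib, sum_index_pow_four] at hext
  simp only [Nat.cast_sub (show 1 ≤ n by omega), Nat.cast_zero, Nat.cast_one] at hext
  linarith

lemma le_rpow_quarter {s X Y : ℝ} (hs : 0 ≤ s) (h : s ^ 4 ≤ X) (hXY : X ≤ Y) :
    s ≤ Y ^ ((1 : ℝ) / 4) := by
  calc s = (s ^ 4) ^ ((1 : ℝ) / 4) := by
        rw [← Real.rpow_natCast, ← Real.rpow_mul hs]; norm_num
    _ ≤ Y ^ ((1 : ℝ) / 4) := Real.rpow_le_rpow (by positivity) (h.trans hXY) (by norm_num)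

/-- upper bounds for the spread of a matrix with n distinct integer
eigenvalues, where spd(A) = λ₁(A) − λₙ(A). -/
theorem spread_upper_bound_distinct_integer_eigenvalues
    (n : ℕ) (hn : 3 ≤ n)
    (A : Matrix (Fin n) (Fin n) ℂ)
    (lam : Fin n → ℤ) (hlam : StrictAnti lam)
    (hchar : A.charpoly = ∏ i : Fin n, (Polynomial.X - Polynomial.C ((lam i : ℤ) : ℂ)))
    (B : Matrix (Fin n) (Fin n) ℂ)
    (hB : B = A - (Matrix.trace A / (n : ℂ)) • (1 : Matrix (Fin n) (Fin n) ℂ))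
    (spd : ℝ)
    (hspd : spd = ((lam ⟨0, by omega⟩ : ℤ) : ℝ) - ((lam ⟨n - 1, by omega⟩ : ℤ) : ℝ)) :
    ((Even n → spd ≤ (8 * (Matrix.trace (B ^ 4)).re -
        ((n : ℝ) - 4) * ((n : ℝ) - 3) * ((n : ℝ) - 2) *
          (3 * (n : ℝ) ^ 2 - 18 * n + 20) / 240) ^ ((1 : ℝ) / 4)) ∧
     (Odd n → spd ≤ (8 * (Matrix.trace (B ^ 4)).re -
        ((n : ℝ) - 3) * (3 * (n : ℝ) ^ 4 - 36 * (n : ℝ) ^ 3 + 182 * (n : ℝ) ^ 2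
          - 444 * n + 415) / 240) ^ ((1 : ℝ) / 4))) ∧
    ((n : ℤ) ∣ (∑ i : Fin n, lam i) →
      (Even n → spd ≤ (8 * (Matrix.trace (B ^ 4)).re -
        ((n : ℝ) - 2) * (3 * (n : ℝ) ^ 4 - 24 * (n : ℝ) ^ 3 + 92 * (n : ℝ) ^ 2
          - 176 * n + 120) / 240) ^ ((1 : ℝ) / 4)) ∧
      (Odd n → spd ≤ (8 * (Matrix.trace (B ^ 4)).re -
        ((n : ℝ) - 1) * ((n : ℝ) - 2) * ((n : ℝ) - 3) *
          (3 * (n : ℝ) ^ 2 - 12 * n + 5) / 240) ^ ((1 : ℝ) / 4))) := by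
  obtain ⟨t, ht⟩ := trace_pow_four_eq A B lam hlam hchar hB
  have hmain := spread_pow_four_le hn (by omega) (by omega) lam hlam t
  rw [← hspd, ← ht] at hmain
  have hs : 0 ≤ spd := by
    have : lam ⟨n - 1, by omega⟩ ≤ lam ⟨0, by omega⟩ := hlam.antitone (by simp)
    rw [hspd, sub_nonneg]
    exact_mod_cast this
  obtain ⟨k, rfl⟩ := Nat.exists_eq_add_of_le hn
  -- In terms of `k = n - 3`, the only negative coefficient in the differences of the polynomials is
  -- that of `k`, which `k ^ 3` compensates. In the third case, where the difference vanishes at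
  -- `n = 4`, expanding in `l = n - 4` leaves only nonnegative coefficients.
  have hk3 : (k : ℝ) ≤ (k : ℝ) ^ 3 := by exact_mod_cast Nat.le_self_pow (by norm_num) k
  have hk0 : (0 : ℝ) ≤ k := k.cast_nonneg
  have hk4 : (0 : ℝ) ≤ (k : ℝ) ^ 4 := by positivity
  have hk5 : (0 : ℝ) ≤ (k : ℝ) ^ 5 := by positivity
  refine ⟨⟨fun _ => le_rpow_quarter hs hmain ?_, fun _ => le_rpow_quarter hs hmain ?_⟩,
    fun _ => ⟨fun he => le_rpow_quarter hs hmain ?_, fun _ => le_rpow_quarter hs hmain ?_⟩⟩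
  · rw [← sub_nonneg]; push_cast; ring_nf; linarith
  · rw [← sub_nonneg]; push_cast; ring_nf; linarith
  · obtain ⟨l, rfl⟩ : ∃ l, k = l + 1 :=
      Nat.exists_eq_succ_of_ne_zero (by rintro rfl; exact absurd he (by decide))
    rw [← sub_nonneg]; push_cast; ring_nf; positivity
  · rw [← sub_nonneg]; push_cast; ring_nf; linarith
end

section
/- Let n ≥ 3 and let A be an n×n complex matrix whose characteristic polynomial splits over the reals with n distinct integer eigenvalues λ_1(A) > λ_2(A) > ⋯ > λ_n(A), and let B = A − (tr A / n)·I_n, so that tr B^k = ∑_{i=1}^n (λ_i(A) − tr A/n)^k is real for each k, with tr B² > 0. Then spd(A)⁴ / 64 ≥ tr B⁴/n − (tr B²/n)² − (tr B³)²/(n·tr B²) + β₂, where β₂ = (n−2)(n−4)(4n²−11n+2)/480 if n is even, and β₂ = (n−1)(n−3)(4n³−19n²+32n−5)/(480n) if n is odd. -/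
/-!
Write `xᵢ = λᵢ - tr A / n`. The quantity `tr B⁴/n - (tr B²/n)² - (tr B³)²/(n tr B²)` is the mean
squared residual of the least-squares regression of `x²` on `x` and `1`, so it is at most the mean
of `q(xᵢ)²` for every monic quadratic `q` (`regression_le`). With `r` half the spread and `yᵢ` the
signed offset of `λᵢ` from the midpoint of the extreme eigenvalues, the choice `q = y² - r²/2` gives
`q² = r⁴/4 - y²(r² - y²)`, and `r⁴/4` is the fourth power of the spread over `64`. It remains to
show `∑ yᵢ²(r² - yᵢ²) ≥ n β₂`.

Sort the eigenvalues by `|yᵢ|`. Counting integers in intervals, the `j`-th value `Y` (from `j = 0`)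
satisfies `Y ≥ j/2` and `r - Y ≥ ⌊(n-1-j)/2⌋ =: b` (`sorted_bounds`), so
`Y²(r² - Y²) = Y²(r - Y)((r - Y) + 2Y) ≥ (j/2)² b (b + j)`. Summing this over `j` gives a
polynomial in `n`, for each parity of `n`, which dominates `n β₂` (`beta2_le_sum`).

The identity `tr Bᵏ = ∑ xᵢᵏ` follows by diagonalizing `A`, whose eigenvalues are distinct.
-/

/-- β₂ from the paper, for an integer n ≥ 3. -/
noncomputable def beta2 (n : ℕ) : ℝ :=
  if Even n then ((n : ℝ) - 2) * ((n : ℝ) - 4) * (4 * (n : ℝ) ^ 2 - 11 * n + 2) / 480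
  else ((n : ℝ) - 1) * ((n : ℝ) - 3) * (4 * (n : ℝ) ^ 3 - 19 * (n : ℝ) ^ 2 + 32 * n - 5)
    / (480 * n)

/-! ### Traces of powers -/

theorem exists_diagonalization {n : ℕ} (A : Matrix (Fin n) (Fin n) ℂ) (μ : Fin n → ℂ)
    (hμ : Function.Injective μ)
    (hchar : A.charpoly = ∏ i : Fin n, (Polynomial.X - Polynomial.C (μ i))) :
    ∃ P : Matrix (Fin n) (Fin n) ℂ, IsUnit P ∧ A * P = P * Matrix.diagonal μ := by
  have h1 : ∀ i, ∃ v : Fin n → ℂ, Module.End.HasEigenvector (Matrix.toLin' A) (μ i) v := by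
    intro i
    apply Module.End.HasEigenvalue.exists_hasEigenvector
    rw [Module.End.hasEigenvalue_iff_isRoot_charpoly, Matrix.charpoly_toLin', hchar,
      Polynomial.IsRoot.def, Polynomial.eval_prod]
    exact Finset.prod_eq_zero (Finset.mem_univ i) (by simp)
  choose v hv using h1
  have hli := Module.End.eigenvectors_linearIndependent' (Matrix.toLin' A) μ hμ v hv
  refine ⟨(Matrix.of v).transpose, ?_, ?_⟩
  · rw [← Matrix.linearIndependent_cols_iff_isUnit]
    exact hli
  · ext j i
    have h := congrFun (hv i).apply_eq_smul j
    rw [Matrix.toLin'_apply] at h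
    rw [Matrix.mul_diagonal]
    simpa [Matrix.mul_apply, Matrix.mulVec, dotProduct, mul_comm] using h

theorem trace_pow_of_diagonalization {n : ℕ} {A P : Matrix (Fin n) (Fin n) ℂ} {μ : Fin n → ℂ}
    (hP : IsUnit P) (hAP : A * P = P * Matrix.diagonal μ) (c : ℂ) (k : ℕ) :
    Matrix.trace ((A - c • (1 : Matrix (Fin n) (Fin n) ℂ)) ^ k) = ∑ i, (μ i - c) ^ k := by
  have h1 : SemiconjBy P (Matrix.diagonal fun i => μ i - c)
      (A - c • (1 : Matrix (Fin n) (Fin n) ℂ)) := by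
    have hd : (Matrix.diagonal fun i => μ i - c)
        = Matrix.diagonal μ - c • (1 : Matrix (Fin n) (Fin n) ℂ) := by
      ext i j
      by_cases hij : i = j <;> simp [Matrix.diagonal, hij]
    rw [SemiconjBy, hd, mul_sub, sub_mul, hAP]
    simp
  have h2 := (h1.pow_right k).eq
  obtain ⟨u, rfl⟩ := hP
  have h3 : (A - c • (1 : Matrix (Fin n) (Fin n) ℂ)) ^ k
      = (u : Matrix (Fin n) (Fin n) ℂ) * (Matrix.diagonal fun i => μ i - c) ^ k
        * ((u⁻¹ : (Matrix (Fin n) (Fin n) ℂ)ˣ) : Matrix (Fin n) (Fin n) ℂ) := by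
    rw [h2, mul_assoc, Units.mul_inv, mul_one]
  rw [h3, Matrix.trace_mul_comm, ← mul_assoc, Units.inv_mul, one_mul, Matrix.diagonal_pow,
    Matrix.trace_diagonal]
  rfl

/-! ### The regression inequality -/

/-- The regression residual of `x²` on `x` and `1` is minimal among all monic quadratics in `x`. -/
theorem regression_le {n : ℕ} (hn : 0 < n) (x : Fin n → ℝ) (h1 : ∑ i, x i = 0)
    (h2 : 0 < ∑ i, x i ^ 2) (a b : ℝ) :
    (∑ i, x i ^ 4) / n - ((∑ i, x i ^ 2) / n) ^ 2
      - (∑ i, x i ^ 3) ^ 2 / (n * ∑ i, x i ^ 2) ≤ (∑ i, (x i ^ 2 + a * x i + b) ^ 2) / n := by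
  have hexp : ∑ i, (x i ^ 2 + a * x i + b) ^ 2 = (∑ i, x i ^ 4) + 2 * a * (∑ i, x i ^ 3)
      + (a ^ 2 + 2 * b) * (∑ i, x i ^ 2) + 2 * a * b * (∑ i, x i) + n * b ^ 2 := by
    have hc : (n : ℝ) * b ^ 2 = ∑ _i : Fin n, b ^ 2 := by simp
    rw [hc]
    simp only [Finset.mul_sum, ← Finset.sum_add_distrib]
    exact Finset.sum_congr rfl fun i _ => by ring
  rw [hexp, h1]
  generalize ∑ i, x i ^ 2 = S at *
  generalize ∑ i, x i ^ 3 = T at *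
  generalize ∑ i, x i ^ 4 = U at *
  have hn' : (0 : ℝ) < n := by exact_mod_cast hn
  have key : (U + 2 * a * T + (a ^ 2 + 2 * b) * S + 2 * a * b * 0 + n * b ^ 2) / n
      - (U / n - (S / n) ^ 2 - T ^ 2 / (n * S)) = (a * S + T) ^ 2 / (n * S) + (b + S / n) ^ 2 := by
    field_simp
    ring
  have : 0 ≤ (a * S + T) ^ 2 / (n * S) + (b + S / n) ^ 2 := by positivity
  linarith

/-! ### Counting eigenvalues by distance from the midpoint -/

/-- Twice the distances from the midpoint of the extreme values, sorted increasingly by `σ`: the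
`j`-th is at least `j`, and at least `2 ⌊(n-1-j)/2⌋` below the spread. -/
theorem sorted_bounds {n : ℕ} (lam : Fin n → ℤ) (hlam : Function.Injective lam) (p q : ℤ)
    (hp : ∀ i, lam i ≤ p) (hq : ∀ i, q ≤ lam i) (σ : Equiv.Perm (Fin n))
    (hσ : Monotone ((fun i => |2 * lam i - p - q|) ∘ σ)) (j : Fin n) :
    (j : ℤ) ≤ |2 * lam (σ j) - p - q| ∧
      2 * (((n - 1 - j) / 2 : ℕ) : ℤ) ≤ (p - q) - |2 * lam (σ j) - p - q| := by
  -- `[u, w]` is the interval of all values no farther from the midpoint than `lam (σ j)`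
  obtain ⟨u, w, huw, hZ, hsum⟩ : ∃ u w : ℤ, u ≤ w ∧ |2 * lam (σ j) - p - q| = w - u
      ∧ u + w = p + q := by
    rcases le_total 0 (2 * lam (σ j) - p - q) with h | h
    · exact ⟨p + q - lam (σ j), lam (σ j), by omega, by rw [abs_of_nonneg h]; ring, by ring⟩
    · exact ⟨lam (σ j), p + q - lam (σ j), by omega, by rw [abs_of_nonpos h]; ring, by ring⟩
  have hle : |2 * lam (σ j) - p - q| ≤ p - q := by
    have h1 := hp (σ j)
    have h2 := hq (σ j)
    rw [abs_le]; constructor <;> omega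
  have hinj : Function.Injective (fun i => lam (σ i)) := hlam.comp σ.injective
  rw [hZ] at hle ⊢
  constructor
  · have hsub : (Finset.Iic j).image (fun i => lam (σ i)) ⊆ Finset.Icc u w := by
      intro a ha
      obtain ⟨i, hi, rfl⟩ := Finset.mem_image.1 ha
      have h := hσ (Finset.mem_Iic.1 hi)
      simp only [Function.comp_apply] at h
      rw [hZ, abs_le] at h
      rw [Finset.mem_Icc]
      omega
    have hc := Finset.card_le_card hsub
    rw [Finset.card_image_of_injective _ hinj, Int.card_Icc, Fin.card_Iic] at hc
    omega
  · have hsub : (Finset.Ici j).image (fun i => lam (σ i)) ⊆ Finset.Icc q u ∪ Finset.Icc w p := by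
      intro a ha
      obtain ⟨i, hi, rfl⟩ := Finset.mem_image.1 ha
      have h := hσ (Finset.mem_Ici.1 hi)
      simp only [Function.comp_apply] at h
      rw [hZ, le_abs] at h
      have h1 := hp (σ i)
      have h2 := hq (σ i)
      simp only [Finset.mem_union, Finset.mem_Icc]
      omega
    have hc := (Finset.card_le_card hsub).trans (Finset.card_union_le _ _)
    rw [Finset.card_image_of_injective _ hinj, Int.card_Icc, Int.card_Icc, Fin.card_Ici] at hc
    omega

/-! ### Summation -/

theorem sum_range_two_mul (g : ℕ → ℝ) (m : ℕ) :
    ∑ j ∈ Finset.range (2 * m), g j = ∑ k ∈ Finset.range m, (g (2 * k) + g (2 * k + 1)) := by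
  induction m with
  | zero => simp
  | succ m ih =>
    rw [Finset.sum_range_succ, ← ih, show 2 * (m + 1) = 2 * m + 1 + 1 by ring,
      Finset.sum_range_succ, Finset.sum_range_succ]
    ring

theorem sum_quartic (c0 c1 c2 c3 c4 : ℝ) (m : ℕ) :
    ∑ k ∈ Finset.range m, (c0 + c1 * k + c2 * (k : ℝ) ^ 2 + c3 * (k : ℝ) ^ 3 + c4 * (k : ℝ) ^ 4)
      = c0 * m + c1 * (m * (m - 1) / 2) + c2 * (m * (m - 1) * (2 * m - 1) / 6)
        + c3 * (m * (m - 1) / 2) ^ 2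
        + c4 * (m * (m - 1) * (2 * m - 1) * (3 * (m : ℝ) ^ 2 - 3 * m - 1) / 30) := by
  induction m with
  | zero => simp
  | succ m ih =>
    rw [Finset.sum_range_succ, ih]
    push_cast
    ring

/-- Lower bound for the contribution `y²(r² - y²)` of the eigenvalue whose distance `y` from the
midpoint is the `j`-th smallest. -/
noncomputable def termBound (n j : ℕ) : ℝ :=
  ((j : ℝ) / 2) ^ 2 * (((n - 1 - j) / 2 : ℕ) : ℝ) * ((((n - 1 - j) / 2 : ℕ) : ℝ) + j)

theorem beta2_le_sum (n : ℕ) (hn : 3 ≤ n) :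
    n * beta2 n ≤ ∑ j ∈ Finset.range n, termBound n j := by
  rcases Nat.even_or_odd' n with ⟨m, rfl | rfl⟩
  · have hsum : ∑ j ∈ Finset.range (2 * m), termBound (2 * m) j
        = ∑ k ∈ Finset.range m, ((m - 1) * m / 4 + ((m - 1) * m - 1 / 4) * k
          + ((m - 1) * m + (m - 1) ^ 2 - 5 / 4) * (k : ℝ) ^ 2 + (-2) * (k : ℝ) ^ 3
          + (-2) * (k : ℝ) ^ 4 : ℝ) := by
      rw [sum_range_two_mul]
      refine Finset.sum_congr rfl fun k hk => ?_
      have hk' := Finset.mem_range.1 hk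
      obtain ⟨d, rfl⟩ : ∃ d, m = k + 1 + d := ⟨m - (k + 1), by omega⟩
      have e1 : (2 * (k + 1 + d) - 1 - 2 * k) / 2 = d := by omega
      have e2 : (2 * (k + 1 + d) - 1 - (2 * k + 1)) / 2 = d := by omega
      unfold termBound
      rw [e1, e2]
      push_cast
      ring
    rw [hsum, sum_quartic, beta2, if_pos (even_two_mul m)]
    obtain ⟨d, rfl⟩ : ∃ d, m = d + 2 := ⟨m - 2, by omega⟩
    push_cast
    rw [← sub_nonneg]
    ring_nf
    positivity
  · have hsum : ∑ j ∈ Finset.range (2 * m + 1), termBound (2 * m + 1) j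
        = ∑ k ∈ Finset.range m, ((m - 1) * m / 4 + ((m - 1) * m - 1 / 4) * k
          + ((m - 1) * m + m ^ 2 - 5 / 4) * (k : ℝ) ^ 2 + (-2) * (k : ℝ) ^ 3
          + (-2) * (k : ℝ) ^ 4 : ℝ) := by
      rw [Finset.sum_range_succ, sum_range_two_mul]
      have e0 : termBound (2 * m + 1) (2 * m) = 0 := by simp [termBound]
      rw [e0, add_zero]
      refine Finset.sum_congr rfl fun k hk => ?_
      have hk' := Finset.mem_range.1 hk
      obtain ⟨d, rfl⟩ : ∃ d, m = k + 1 + d := ⟨m - (k + 1), by omega⟩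
      have e1 : (2 * (k + 1 + d) + 1 - 1 - 2 * k) / 2 = d + 1 := by omega
      have e2 : (2 * (k + 1 + d) + 1 - 1 - (2 * k + 1)) / 2 = d := by omega
      unfold termBound
      rw [e1, e2]
      push_cast
      ring
    rw [hsum, sum_quartic, beta2, if_neg (by simp)]
    obtain ⟨d, rfl⟩ : ∃ d, m = d + 1 := ⟨m - 1, by omega⟩
    have hN : ((2 * (d + 1) + 1 : ℕ) : ℝ) ≠ 0 := by positivity
    rw [mul_div_assoc', mul_comm (480 : ℝ), mul_div_mul_left _ _ hN]
    push_cast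
    rw [← sub_nonneg]
    -- the difference is `(2d⁴ + 4d³ + d² - d)/12`
    have hd : (d : ℝ) ≤ (d : ℝ) ^ 2 := by exact_mod_cast Nat.le_self_pow two_ne_zero d
    have hd3 : (0 : ℝ) ≤ (d : ℝ) ^ 3 := by positivity
    have hd4 : (0 : ℝ) ≤ (d : ℝ) ^ 4 := by positivity
    nlinarith

theorem beta2_le_sum_sq {n : ℕ} (hn : 3 ≤ n) (lam : Fin n → ℤ) (hlam : Function.Injective lam)
    (p q : ℤ) (hp : ∀ i, lam i ≤ p) (hq : ∀ i, q ≤ lam i) :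
    n * beta2 n ≤ ∑ i, ((lam i : ℝ) - (p + q) / 2) ^ 2
      * ((((p : ℝ) - q) / 2) ^ 2 - ((lam i : ℝ) - (p + q) / 2) ^ 2) := by
  refine (beta2_le_sum n hn).trans ?_
  set σ := Tuple.sort (fun i => |2 * lam i - p - q|)
  have hσ : Monotone ((fun i => |2 * lam i - p - q|) ∘ σ) := Tuple.monotone_sort _
  rw [← Equiv.sum_comp σ, Finset.sum_range]
  refine Finset.sum_le_sum fun j _ => ?_
  obtain ⟨h1, h2⟩ := sorted_bounds lam hlam p q hp hq σ hσ j
  unfold termBound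
  generalize (n - 1 - j) / 2 = e at h2 ⊢
  have h1' : ((j : ℕ) : ℝ) ≤ |2 * (lam (σ j) : ℝ) - p - q| := by exact_mod_cast h1
  have h2' : 2 * (e : ℝ) ≤ (p - q) - |2 * (lam (σ j) : ℝ) - p - q| := by
    exact_mod_cast h2
  have hb : (0 : ℝ) ≤ (e : ℝ) := Nat.cast_nonneg _
  have ha : (0 : ℝ) ≤ ((j : ℕ) : ℝ) := Nat.cast_nonneg _
  generalize (e : ℝ) = b at *
  generalize ((j : ℕ) : ℝ) = a at *
  have hsq : ((lam (σ j) : ℝ) - (p + q) / 2) ^ 2 = (|2 * (lam (σ j) : ℝ) - p - q| / 2) ^ 2 := by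
    rw [div_pow, sq_abs]; ring
  rw [hsq]
  generalize |2 * (lam (σ j) : ℝ) - p - q| = Z at *
  calc (a / 2) ^ 2 * b * (b + a)
      ≤ (Z / 2) ^ 2 * (((p : ℝ) - q) / 2 - Z / 2) * (((p : ℝ) - q) / 2 + Z / 2) := by
        have hZ : 0 ≤ Z := ha.trans h1'
        have : b ≤ ((p : ℝ) - q) / 2 - Z / 2 := by linarith
        have : b + a ≤ ((p : ℝ) - q) / 2 + Z / 2 := by linarith
        have : 0 ≤ ((p : ℝ) - q) / 2 - Z / 2 := by linarith
        gcongr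
    _ = _ := by ring

/-! ### The spread bound -/

/-- lower bound for the spread of a matrix with n distinct integer
eigenvalues, where spd(A) = λ₁(A) − λₙ(A). -/
theorem spread_lower_bound_distinct_integer_eigenvalues
    (n : ℕ) (hn : 3 ≤ n)
    (A : Matrix (Fin n) (Fin n) ℂ)
    (lam : Fin n → ℤ) (hlam : StrictAnti lam)
    (hchar : A.charpoly = ∏ i : Fin n, (Polynomial.X - Polynomial.C ((lam i : ℤ) : ℂ)))
    (B : Matrix (Fin n) (Fin n) ℂ)
    (hB : B = A - (Matrix.trace A / (n : ℂ)) • (1 : Matrix (Fin n) (Fin n) ℂ))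
    (spd : ℝ)
    (hspd : spd = ((lam ⟨0, by omega⟩ : ℤ) : ℝ) - ((lam ⟨n - 1, by omega⟩ : ℤ) : ℝ)) :
    spd ^ 4 / 64 ≥ (Matrix.trace (B ^ 4)).re / n - ((Matrix.trace (B ^ 2)).re / n) ^ 2
      - ((Matrix.trace (B ^ 3)).re) ^ 2 / (n * (Matrix.trace (B ^ 2)).re)
      + beta2 n := by
  have hlinj : Function.Injective lam := hlam.injective
  have hn0 : 0 < n := by omega
  have hnR : (0 : ℝ) < n := by exact_mod_cast hn0
  obtain ⟨P, hP, hAP⟩ := exists_diagonalization A (fun i => ((lam i : ℤ) : ℂ))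
    (Int.cast_injective.comp hlinj) hchar
  have htrA : Matrix.trace A = ∑ i, ((lam i : ℤ) : ℂ) := by
    simpa using trace_pow_of_diagonalization hP hAP 0 1
  obtain ⟨c, hc⟩ : ∃ c : ℝ, c = (∑ i, (lam i : ℝ)) / n := ⟨_, rfl⟩
  have hcA : Matrix.trace A / (n : ℂ) = (c : ℂ) := by
    rw [htrA, hc]; push_cast; rfl
  have htr : ∀ k : ℕ, (Matrix.trace (B ^ k)).re = ∑ i, ((lam i : ℝ) - c) ^ k := by
    intro k
    rw [hB, hcA, trace_pow_of_diagonalization hP hAP]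
    have : ∑ i, (((lam i : ℤ) : ℂ) - (c : ℂ)) ^ k
        = ((∑ i, ((lam i : ℝ) - c) ^ k : ℝ) : ℂ) := by push_cast; rfl
    rw [this, Complex.ofReal_re]
  rw [htr 2, htr 3, htr 4]
  have hs1 : ∑ i, ((lam i : ℝ) - c) = 0 := by
    rw [Finset.sum_sub_distrib, hc]
    simp only [Finset.sum_const, Finset.card_univ, Fintype.card_fin, nsmul_eq_mul]
    field_simp
    ring
  have hs2 : 0 < ∑ i, ((lam i : ℝ) - c) ^ 2 := by
    rcases (Finset.sum_nonneg fun i (_ : i ∈ Finset.univ) =>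
      sq_nonneg ((lam i : ℝ) - c)).lt_or_eq with h | h
    · exact h
    -- a vanishing second moment would make two eigenvalues coincide
    · exfalso
      have h0 := (Finset.sum_eq_zero_iff_of_nonneg fun i (_ : i ∈ Finset.univ) =>
        sq_nonneg ((lam i : ℝ) - c)).1 h.symm
      have ha := pow_eq_zero_iff (two_ne_zero) |>.1 (h0 ⟨0, by omega⟩ (Finset.mem_univ _))
      have hb := pow_eq_zero_iff (two_ne_zero) |>.1 (h0 ⟨1, by omega⟩ (Finset.mem_univ _))
      have hab : (lam ⟨0, by omega⟩ : ℝ) = lam ⟨1, by omega⟩ := by linarith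
      have := hlinj (Int.cast_injective hab)
      simp at this
  set p := lam ⟨0, by omega⟩ with hpdef
  set q := lam ⟨n - 1, by omega⟩ with hqdef
  have hp : ∀ i, lam i ≤ p := fun i => hlam.antitone (Fin.mk_le_of_le_val (Nat.zero_le _))
  have hq : ∀ i, q ≤ lam i := fun i =>
    hlam.antitone (Fin.le_def.2 (Nat.le_sub_one_of_lt i.isLt))
  have hβ := beta2_le_sum_sq hn lam hlinj p q hp hq
  -- `d` is the offset of the mean from the midpoint, so that `λ - (p + q)/2 = (λ - c) + d`
  obtain ⟨d, hd⟩ : ∃ d : ℝ, d = c - (p + q) / 2 := ⟨_, rfl⟩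
  have hreg := regression_le hn0 (fun i => (lam i : ℝ) - c) hs1 hs2 (2 * d)
    (d ^ 2 - (((p : ℝ) - q) / 2) ^ 2 / 2)
  have hid : ∑ i, (((lam i : ℝ) - c) ^ 2 + 2 * d * ((lam i : ℝ) - c)
        + (d ^ 2 - (((p : ℝ) - q) / 2) ^ 2 / 2)) ^ 2
      = n * (spd ^ 4 / 64) - ∑ i, ((lam i : ℝ) - (p + q) / 2) ^ 2
        * ((((p : ℝ) - q) / 2) ^ 2 - ((lam i : ℝ) - (p + q) / 2) ^ 2) := by
    have hcst : (n : ℝ) * (spd ^ 4 / 64) = ∑ _i : Fin n, spd ^ 4 / 64 := by simp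
    rw [hcst, ← Finset.sum_sub_distrib]
    refine Finset.sum_congr rfl fun i _ => ?_
    rw [hd, hspd]
    ring
  rw [hid] at hreg
  have hfin : (n * (spd ^ 4 / 64) - ∑ i, ((lam i : ℝ) - (p + q) / 2) ^ 2
        * ((((p : ℝ) - q) / 2) ^ 2 - ((lam i : ℝ) - (p + q) / 2) ^ 2)) / n
      ≤ spd ^ 4 / 64 - beta2 n := by
    rw [div_le_iff₀ hnR]
    linarith
  linarith
end
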